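/- Optimality certificate for cell partitions: let ψ : Fin M → ℝ and let (A_i)_{i ∈ Fin M} be a measurable partition of D with (μ(A_i)).toReal = ω i for every i and with A_i ⊆ {v ∈ D : J v i − ψ i = ψᶜ(v)} for every i. Then Σ_{i ∈ Fin M} ∫_{A_i} J v i dμ(v) = F(ψ); consequently (A_i) minimizes the primal cost over all measurable partitions (A'_i) of D with (μ(A'_i)).toReal = ω i for every i, and ψ maximizes F over all ψ' : Fin M → ℝ. -/

import Mathlib

open MeasureTheory

/-!
For a partition `A` meeting the capacities, the duality gap at `ψ` is the total slack
`∑ i, ∫ v in A i, (J v i - ψ i - ψᶜ v)`, because integrating `ψ i` over `A i` gives `ψ i * ω i`.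
The slack is nonnegative, so every dual value is below every primal cost; it vanishes when each
`A i` lies where `i` attains the minimum `ψᶜ`, so such a pair `(A, ψ)` is optimal on both sides.
-/

section SemidiscreteDuality

variable {D ι : Type*}

/-- The c-transform `ψᶜ` of the weights `ψ` for the semi-discrete cost `J`. It is the minimum of
`J v i - ψ i` over `i` when `ι` is finite and nonempty; the real infimum over an empty `ι` is
`0`. -/
noncomputable def cTransform (J : D → ι → ℝ) (ψ : ι → ℝ) (v : D) : ℝ :=
  ⨅ i, (J v i - ψ i)

theorem cTransform_le [Finite ι] (J : D → ι → ℝ) (ψ : ι → ℝ) (v : D) (i : ι) :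
    cTransform J ψ v ≤ J v i - ψ i :=
  ciInf_le (Set.finite_range _).bddBelow i

variable [MeasurableSpace D] {μ : Measure D}

theorem integrable_ciInf [Finite ι] [Nonempty ι] {f : ι → D → ℝ}
    (hf : ∀ i, Integrable (f i) μ) : Integrable (fun v => ⨅ i, f i v) μ := by
  have := Fintype.ofFinite ι
  have hinf : Integrable (Finset.univ.inf' Finset.univ_nonempty f) μ :=
    Finset.inf'_induction _ _ (p := (Integrable · μ)) (fun _ hg _ hh => hg.inf hh) fun i _ => hf i
  refine hinf.congr (.of_forall fun v => ?_)
  rw [Finset.inf'_apply, Finset.inf'_univ_eq_ciInf]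

theorem integrable_cTransform [Finite ι] [Nonempty ι] [IsFiniteMeasure μ] {J : D → ι → ℝ}
    (hJ : ∀ i, Integrable (fun v => J v i) μ) (ψ : ι → ℝ) : Integrable (cTransform J ψ) μ :=
  integrable_ciInf fun i => (hJ i).sub (integrable_const (ψ i))

/-- A partition of `D` up to `μ`-null sets, indexed by `ι`; cells may be empty. -/
structure IsAEPartition (μ : Measure D) (A : ι → Set D) : Prop where
  nullMeasurableSet : ∀ i, NullMeasurableSet (A i) μ
  aedisjoint : Pairwise (Function.onFun (AEDisjoint μ) A)
  ae_mem_iUnion : ∀ᵐ v ∂μ, v ∈ ⋃ i, A i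

namespace IsAEPartition

theorem of_measurableSet {A : ι → Set D} (hmeas : ∀ i, MeasurableSet (A i))
    (hdisj : Pairwise (Function.onFun Disjoint A)) (hcover : ⋃ i, A i = Set.univ) :
    IsAEPartition μ A where
  nullMeasurableSet i := (hmeas i).nullMeasurableSet
  aedisjoint _ _ hij := (hdisj hij).aedisjoint
  ae_mem_iUnion := .of_forall fun v => hcover ▸ Set.mem_univ v

theorem integral_eq_sum_setIntegral [Fintype ι] {E : Type*} [NormedAddCommGroup E]
    [NormedSpace ℝ E] {A : ι → Set D} (hA : IsAEPartition μ A) {f : D → E}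
    (hf : Integrable f μ) : ∫ v, f v ∂μ = ∑ i, ∫ v in A i, f v ∂μ := by
  rw [integral_eq_setIntegral hA.ae_mem_iUnion,
    integral_iUnion_ae hA.nullMeasurableSet hA.aedisjoint hf.integrableOn, tsum_fintype]

end IsAEPartition

variable [Fintype ι] {J : D → ι → ℝ} {ω : ι → ℝ} {A : ι → Set D}

/-- The cost of the assignment sending each point of the cell `A i` to the target `i`. -/
noncomputable def primalCost (μ : Measure D) (J : D → ι → ℝ) (A : ι → Set D) : ℝ :=
  ∑ i, ∫ v in A i, J v i ∂μ

/-- The Kantorovich dual functional `F` of the semi-discrete transport problem with cost `J`,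
source `μ` and target masses `ω`. -/
noncomputable def dualObjective (μ : Measure D) (J : D → ι → ℝ) (ω ψ : ι → ℝ) : ℝ :=
  ∑ i, ψ i * ω i + ∫ v, cTransform J ψ v ∂μ

variable [Nonempty ι] [IsFiniteMeasure μ]

theorem primalCost_sub_dualObjective (hJ : ∀ i, Integrable (fun v => J v i) μ)
    (hA : IsAEPartition μ A) (hω : ∀ i, μ.real (A i) = ω i) (ψ : ι → ℝ) :
    primalCost μ J A - dualObjective μ J ω ψ =
      ∑ i, ∫ v in A i, (J v i - ψ i - cTransform J ψ v) ∂μ := by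
  have hψ : Integrable (cTransform J ψ) μ := integrable_cTransform hJ ψ
  have slack_cell (i : ι) : ∫ v in A i, (J v i - ψ i - cTransform J ψ v) ∂μ =
      ∫ v in A i, J v i ∂μ - ψ i * ω i - ∫ v in A i, cTransform J ψ v ∂μ := by
    have hJi : IntegrableOn (fun v => J v i) (A i) μ := (hJ i).integrableOn
    rw [integral_sub (f := fun v => J v i - ψ i) (hJi.sub (integrable_const (ψ i))) hψ.integrableOn,
      integral_sub hJi (integrable_const (ψ i)), setIntegral_const, hω, smul_eq_mul,
      mul_comm]
  rw [primalCost, dualObjective, hA.integral_eq_sum_setIntegral hψ, ← sub_sub]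
  simp only [slack_cell, Finset.sum_sub_distrib]

theorem dualObjective_le_primalCost (hJ : ∀ i, Integrable (fun v => J v i) μ)
    (hA : IsAEPartition μ A) (hω : ∀ i, μ.real (A i) = ω i) (ψ : ι → ℝ) :
    dualObjective μ J ω ψ ≤ primalCost μ J A := by
  rw [← sub_nonneg, primalCost_sub_dualObjective hJ hA hω]
  exact Finset.sum_nonneg fun i _ =>
    integral_nonneg fun v => sub_nonneg.2 (cTransform_le J ψ v i)

theorem primalCost_eq_dualObjective (hJ : ∀ i, Integrable (fun v => J v i) μ)
    (hA : IsAEPartition μ A) (hω : ∀ i, μ.real (A i) = ω i) {ψ : ι → ℝ}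
    (hsel : ∀ i, ∀ᵐ v ∂μ.restrict (A i), J v i - ψ i = cTransform J ψ v) :
    primalCost μ J A = dualObjective μ J ω ψ := by
  rw [← sub_eq_zero, primalCost_sub_dualObjective hJ hA hω]
  exact Finset.sum_eq_zero fun i _ =>
    integral_eq_zero_of_ae ((hsel i).mono fun _ => sub_eq_zero_of_eq)

theorem cell_partition_optimality_certificate_general
    (hJ : ∀ i, Integrable (fun v => J v i) μ) (hA : IsAEPartition μ A)
    (hω : ∀ i, μ.real (A i) = ω i) {ψ : ι → ℝ}
    (hsel : ∀ i, ∀ᵐ v ∂μ.restrict (A i), J v i - ψ i = cTransform J ψ v) :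
    primalCost μ J A = dualObjective μ J ω ψ ∧
    (∀ A' : ι → Set D, IsAEPartition μ A' → (∀ i, μ.real (A' i) = ω i) →
      primalCost μ J A ≤ primalCost μ J A') ∧
    ∀ ψ' : ι → ℝ, dualObjective μ J ω ψ' ≤ dualObjective μ J ω ψ := by
  have heq : primalCost μ J A = dualObjective μ J ω ψ := primalCost_eq_dualObjective hJ hA hω hsel
  exact ⟨heq, fun _ hA' hω' => heq.trans_le (dualObjective_le_primalCost hJ hA' hω' ψ),
    fun ψ' => (dualObjective_le_primalCost hJ hA hω ψ').trans_eq heq⟩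

end SemidiscreteDuality

/-- Optimality certificate: if the measurable partition `(A_i)` satisfies the
capacity constraints and each `A_i` lies in the set where the minimum defining
the c-transform is attained at `i`, then the primal cost equals `F ψ`;
consequently `(A_i)` is primal optimal and `ψ` is dual optimal. -/
theorem cell_partition_optimality_certificate {D : Type*} [MeasurableSpace D]
    (μ : Measure D) [IsFiniteMeasure μ] (M : ℕ) (hM : 0 < M)
    (J : D → Fin M → ℝ) (hJint : ∀ i, Integrable (fun v => J v i) μ)
    (hJmeas : ∀ i, Measurable (fun v => J v i))
    (ω : Fin M → ℝ) (F : (Fin M → ℝ) → ℝ)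
    (hF : ∀ ψ : Fin M → ℝ,
      F ψ = ∑ i, ψ i * ω i + ∫ v, (⨅ i, (J v i - ψ i)) ∂μ)
    (ψ : Fin M → ℝ) (A : Fin M → Set D)
    (hmeas : ∀ i, MeasurableSet (A i))
    (hdisj : Pairwise (Function.onFun Disjoint A))
    (hcover : (⋃ i, A i) = Set.univ)
    (hcap : ∀ i, (μ (A i)).toReal = ω i)
    (hsel : ∀ i, A i ⊆ {v | J v i - ψ i = ⨅ j, (J v j - ψ j)}) :
    (∑ i, ∫ v in A i, J v i ∂μ) = F ψ ∧
    (∀ A' : Fin M → Set D,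
      (∀ i, MeasurableSet (A' i)) →
      Pairwise (Function.onFun Disjoint A') →
      (⋃ i, A' i) = Set.univ →
      (∀ i, (μ (A' i)).toReal = ω i) →
      (∑ i, ∫ v in A i, J v i ∂μ) ≤ ∑ i, ∫ v in A' i, J v i ∂μ) ∧
    (∀ ψ' : Fin M → ℝ, F ψ' ≤ F ψ) := by
  obtain rfl : F = dualObjective μ J ω := funext hF
  have : Nonempty (Fin M) := ⟨⟨0, hM⟩⟩
  have ⟨heq, hprimal, hdual⟩ := cell_partition_optimality_certificate_general hJint
    (.of_measurableSet hmeas hdisj hcover) hcap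
    fun i => ae_restrict_of_forall_mem (hmeas i) (hsel i)
  exact ⟨heq, fun A' hmeas' hdisj' hcover' hcap' =>
    hprimal A' (.of_measurableSet hmeas' hdisj' hcover') hcap', hdual⟩
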